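/- Let d ≥ 3 and let X₁,…,X_N and Y₁,…,Y_N be 2N independent random points uniformly distributed in [0,1]^d, with L_N = L_MBM(X₁,…,X_N; Y₁,…,Y_N). Then E(L_N) / N^{1−1/d} converges as N → ∞ to the constant β_MBM(d), the same limit as M(N)/N^{1−1/d} in the Poissonized model. -/

import Mathlib

open MeasureTheory ProbabilityTheory Filter

noncomputable section

/-- The unit cube `[0,1]^d` in Euclidean space `ℝ^d`. -/
def unitCube (d : ℕ) : Set (EuclideanSpace ℝ (Fin d)) :=
  {x | ∀ i, x i ∈ Set.Icc (0 : ℝ) 1}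

/-- The uniform probability measure on the unit cube `[0,1]^d`
(the cube has Lebesgue measure one, so the restriction of Lebesgue measure
to the cube is the uniform probability measure on it). -/
def unifCube (d : ℕ) : Measure (EuclideanSpace ℝ (Fin d)) :=
  volume.restrict (unitCube d)

/-- `LMBMon X Y A B` is the minimum total Euclidean length of a partial bipartite
matching pairing `min A.card B.card` of the points `X j, j ∈ A` with as many of the
points `Y j, j ∈ B`, each pair consisting of one `X`-point and one `Y`-point. -/
def LMBMon {d N₁ N₂ : ℕ} (X : Fin N₁ → EuclideanSpace ℝ (Fin d))
    (Y : Fin N₂ → EuclideanSpace ℝ (Fin d)) (A : Finset (Fin N₁)) (B : Finset (Fin N₂)) : ℝ :=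
  sInf { s | ∃ (σ : Fin (min A.card B.card) ↪ Fin N₁) (τ : Fin (min A.card B.card) ↪ Fin N₂),
    (∀ i, σ i ∈ A) ∧ (∀ i, τ i ∈ B) ∧ s = ∑ i, dist (X (σ i)) (Y (τ i)) }

/-- `LMBM X Y` : the minimum total Euclidean length of a bipartite matching between the
points of `X` and the points of `Y`; if the two families have different cardinalities
`N₁ ≠ N₂`, it is the minimum length of a partial matching pairing `min N₁ N₂` points of
each family, leaving `|N₁ - N₂|` points unmatched. -/
def LMBM {d N₁ N₂ : ℕ} (X : Fin N₁ → EuclideanSpace ℝ (Fin d))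
    (Y : Fin N₂ → EuclideanSpace ℝ (Fin d)) : ℝ :=
  LMBMon X Y Finset.univ Finset.univ

/-- `MP d lam`: the expected length of a minimum bipartite matching in the Poissonized
model on `[0,1]^d` with intensity `lam`: the numbers `n₁, n₂` of points of the two
families are independent Poisson(lam) variables and the points are i.i.d. uniform
on the cube. -/
def MP (d : ℕ) (lam : ℝ) : ℝ :=
  ∑' n₁ : ℕ, ∑' n₂ : ℕ,
    (Real.exp (-lam) * lam ^ n₁ / n₁.factorial) *
      ((Real.exp (-lam) * lam ^ n₂ / n₂.factorial) *
        ∫ p : (Fin n₁ → EuclideanSpace ℝ (Fin d)) × (Fin n₂ → EuclideanSpace ℝ (Fin d)),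
          LMBM p.1 p.2 ∂ ((Measure.pi fun _ => unifCube d).prod (Measure.pi fun _ => unifCube d)))

end

/-!
Cut the cube into `m ^ d` cells of side `1 / m` and match inside each cell. When `m ^ d * N`
points of each colour are dropped, a cell receives `N` of each up to fluctuations of order `√N`,
so `g N = E L_N` satisfies `g (m ^ d * N) ≤ m ^ (d - 1) * g N + C_m * √N`. For `d ≥ 3` the error
is negligible against `N ^ (1 - 1 / d)`, so `g N / N ^ (1 - 1 / d)` at one large `N` bounds from
above, up to `ε`, its values at `m ^ d * N`. Subadditivity of `g` interpolates between
consecutive `m` in a range `m₀ ≤ m < 2 * m₀`, and steps from `k` to `2 ^ d * k`, whose errors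
sum geometrically, reach all larger arguments. An upper bound of this kind by every large value
forces convergence. Adding or removing `k` points changes the length by at most `√d * k`, so
replacing `N` by Poisson counts costs `O(√N)`.
-/

section AlmostHomogeneous

lemma tendsto_natCast_rpow_of_neg {r : ℝ} (hr : r < 0) :
    Tendsto (fun N : ℕ => (N : ℝ) ^ r) atTop (nhds 0) := by
  simpa only [neg_neg, Function.comp_def] using
    (tendsto_rpow_neg_atTop (neg_pos.2 hr)).comp tendsto_natCast_atTop_atTop

lemma exists_tendsto_of_eventually_le_add {ι : Type*} {l : Filter ι} [l.NeBot] {F : ι → ℝ}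
    (hbdd : l.IsBoundedUnder (· ≥ ·) F)
    (h : ∀ ε > 0, ∀ᶠ i in l, ∀ᶠ k in l, F k ≤ F i + ε) :
    ∃ β, Tendsto F l (nhds β) := by
  obtain ⟨i, hi⟩ := (h 1 one_pos).exists
  have hbdd' : l.IsBoundedUnder (· ≤ ·) F := ⟨F i + 1, hi⟩
  refine ⟨liminf F l, tendsto_order.2
    ⟨fun a ha => eventually_lt_of_lt_liminf ha hbdd, fun a ha => ?_⟩⟩
  obtain ⟨b, hb, hba⟩ := exists_between ha
  obtain ⟨j, hj, hk⟩ := ((frequently_lt_of_liminf_lt hbdd'.isCoboundedUnder_ge hb).and_eventually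
    (h (a - b) (sub_pos.2 hba))).exists
  filter_upwards [hk] with k hk
  linarith

lemma le_of_le_window {G : ℕ → ℝ} {b : ℕ} (hb : 1 < b) (hG : ∀ k, b ≤ k → G k ≤ G (k / b))
    {T : ℕ} (hT : 1 ≤ T) {B : ℝ} (hB : ∀ t, T ≤ t → t < b * T → G t ≤ B) {k : ℕ} (hk : T ≤ k) :
    G k ≤ B := by
  induction k using Nat.strong_induction_on with
  | _ k ih =>
    rcases lt_or_ge k (b * T) with hlt | hge
    · exact hB k hk hlt
    · exact (hG k ((Nat.le_mul_of_pos_right b hT).trans hge)).trans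
        (ih _ (Nat.div_lt_self (hT.trans hk) hb)
          ((Nat.le_div_iff_mul_le (by lia)).2 (by lia)))

lemma exists_pow_mul_le_lt {d m₀ N t : ℕ} (hd : d ≠ 0) (hN : 1 ≤ N)
    (h₁ : m₀ ^ d * N ≤ t) (h₂ : t < 2 ^ d * (m₀ ^ d * N)) :
    ∃ m ∈ Finset.Ico m₀ (2 * m₀), m ^ d * N ≤ t ∧ t < (m + 1) ^ d * N := by
  refine ⟨Nat.nthRoot d (t / N), Finset.mem_Ico.2 ⟨?_, ?_⟩, ?_, ?_⟩
  · exact (Nat.le_nthRoot_iff hd).2 ((Nat.le_div_iff_mul_le hN).2 h₁)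
  · rw [Nat.nthRoot_lt_iff hd, mul_pow]
    exact (Nat.div_lt_iff_lt_mul hN).2 (by rwa [mul_assoc])
  · exact (Nat.le_div_iff_mul_le hN).1 (Nat.pow_nthRoot_le (.inl hd))
  · exact (Nat.div_lt_iff_lt_mul hN).1 (Nat.lt_pow_nthRoot_add_one hd _)

/-- A nonnegative subadditive sequence `f` that is almost homogeneous of degree `α` under
multiplication of its argument by `d`-th powers: passing from `N` to `m ^ d * N` multiplies `f`
by at most `(m ^ d) ^ α`, up to an error of order `N ^ σ` that may depend on `m` in any way. -/
structure IsAlmostHomogeneous (f : ℕ → ℝ) (d : ℕ) (α σ : ℝ) : Prop where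
  nonneg : ∀ n, 0 ≤ f n
  add_le : ∀ a b, f (a + b) ≤ f a + f b
  pow_mul_le : ∀ m : ℕ, 1 ≤ m → ∃ C : ℝ, ∀ N : ℕ, 1 ≤ N →
    f (m ^ d * N) ≤ ((m : ℝ) ^ d) ^ α * f N + C * (N : ℝ) ^ σ

namespace IsAlmostHomogeneous

variable {f : ℕ → ℝ} {d : ℕ} {α σ : ℝ}

lemma exists_div_rpow_add_le (hf : IsAlmostHomogeneous f d α σ) (hα : 0 ≤ α) {m : ℕ}
    (hm : 1 ≤ m) :
    ∃ C : ℝ, 0 ≤ C ∧ ∀ N s : ℕ, 1 ≤ N →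
      f (m ^ d * N + s) / ((m ^ d * N + s : ℕ) : ℝ) ^ α ≤
        f N / (N : ℝ) ^ α + C * (N : ℝ) ^ (σ - α) + f s / ((m ^ d * N : ℕ) : ℝ) ^ α := by
  obtain ⟨C, hC⟩ := hf.pow_mul_le m hm
  have : 0 < ((m : ℝ) ^ d) ^ α := by positivity
  refine ⟨|C| / ((m : ℝ) ^ d) ^ α, by positivity, fun N s hN => ?_⟩
  have hNpos : (0 : ℝ) < N := by exact_mod_cast hN
  have hden : ((m ^ d * N : ℕ) : ℝ) ^ α = ((m : ℝ) ^ d) ^ α * (N : ℝ) ^ α := by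
    push_cast
    exact Real.mul_rpow (by positivity) (by positivity)
  have hnum : f (m ^ d * N + s) ≤ ((m : ℝ) ^ d) ^ α * f N + |C| * (N : ℝ) ^ σ + f s := by
    have habs : C * (N : ℝ) ^ σ ≤ |C| * (N : ℝ) ^ σ := by gcongr; exact le_abs_self C
    linarith [hf.add_le (m ^ d * N) s, hC N hN]
  calc f (m ^ d * N + s) / ((m ^ d * N + s : ℕ) : ℝ) ^ α
      ≤ f (m ^ d * N + s) / ((m ^ d * N : ℕ) : ℝ) ^ α := by
        gcongr
        · exact hf.nonneg _
        · exact Nat.le_add_right _ _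
    _ ≤ (((m : ℝ) ^ d) ^ α * f N + |C| * (N : ℝ) ^ σ + f s) / ((m ^ d * N : ℕ) : ℝ) ^ α := by
        gcongr
    _ = _ := by
        rw [hden, Real.rpow_sub hNpos]
        field_simp

lemma exists_div_rpow_le_div (hf : IsAlmostHomogeneous f d α σ) (hσ : 0 ≤ σ) (hσα : σ < α) :
    ∃ C : ℝ, 0 ≤ C ∧ ∀ k : ℕ, 2 ^ d ≤ k →
      f k / (k : ℝ) ^ α ≤ f (k / 2 ^ d) / ((k / 2 ^ d : ℕ) : ℝ) ^ α +
        C * ((k / 2 ^ d : ℕ) : ℝ) ^ (σ - α) := by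
  have hα : 0 < α := hσ.trans_lt hσα
  obtain ⟨C, hC0, hC⟩ := hf.exists_div_rpow_add_le hα.le one_le_two
  set R : ℝ := ∑ r ∈ Finset.range (2 ^ d), f r
  have hR : 0 ≤ R := Finset.sum_nonneg fun r _ => hf.nonneg r
  refine ⟨C + R, by positivity, fun k hk => ?_⟩
  set N := k / 2 ^ d
  have hN : 1 ≤ N := Nat.div_pos hk (by positivity)
  have hN' : (1 : ℝ) ≤ N := by exact_mod_cast hN
  have hr : f (k % 2 ^ d) ≤ R := Finset.single_le_sum (f := f) (fun r _ => hf.nonneg r)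
    (Finset.mem_range.2 (Nat.mod_lt _ (by positivity)))
  have hrest : f (k % 2 ^ d) / ((2 ^ d * N : ℕ) : ℝ) ^ α ≤ R * (N : ℝ) ^ (σ - α) :=
    calc f (k % 2 ^ d) / ((2 ^ d * N : ℕ) : ℝ) ^ α ≤ R / (N : ℝ) ^ α := by
          gcongr
          exact Nat.le_mul_of_pos_left N (by positivity)
      _ = R * (N : ℝ) ^ (-α) := by rw [Real.rpow_neg (by positivity), div_eq_mul_inv]
      _ ≤ R * (N : ℝ) ^ (σ - α) := by gcongr; linarith
  have hstep := hC N (k % 2 ^ d) hN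
  rw [Nat.div_add_mod] at hstep
  linarith

-- `A` sums the geometric series of the errors met along the descent `k ↦ k / 2 ^ d`.
lemma exists_antitone_correction (hf : IsAlmostHomogeneous f d α σ) (hd : d ≠ 0) (hσ : 0 ≤ σ)
    (hσα : σ < α) :
    ∃ A : ℝ, 0 ≤ A ∧ ∀ k : ℕ, 2 ^ d ≤ k →
      f k / (k : ℝ) ^ α + A * (k : ℝ) ^ (σ - α) ≤
        f (k / 2 ^ d) / ((k / 2 ^ d : ℕ) : ℝ) ^ α + A * ((k / 2 ^ d : ℕ) : ℝ) ^ (σ - α) := by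
  obtain ⟨C, hC0, hC⟩ := hf.exists_div_rpow_le_div hσ hσα
  set ρ : ℝ := ((2 : ℝ) ^ d) ^ (σ - α)
  have hρ : 0 < 1 - ρ := sub_pos.2 <|
    Real.rpow_lt_one_of_one_lt_of_neg (one_lt_pow₀ one_lt_two hd) (by linarith)
  refine ⟨C / (1 - ρ), by positivity, fun k hk => ?_⟩
  set N := k / 2 ^ d
  have hN : (0 : ℝ) < N := by exact_mod_cast Nat.div_pos hk (by positivity)
  have hdecay : (k : ℝ) ^ (σ - α) ≤ ρ * (N : ℝ) ^ (σ - α) := by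
    rw [← Real.mul_rpow (by positivity) (by positivity)]
    exact Real.rpow_le_rpow_of_nonpos (by positivity)
      (by exact_mod_cast Nat.mul_div_le k (2 ^ d)) (by linarith)
  calc f k / (k : ℝ) ^ α + C / (1 - ρ) * (k : ℝ) ^ (σ - α)
      ≤ f N / (N : ℝ) ^ α + C * (N : ℝ) ^ (σ - α)
          + C / (1 - ρ) * (ρ * (N : ℝ) ^ (σ - α)) := by
        gcongr
        exact hC k hk
    _ = f N / (N : ℝ) ^ α + C / (1 - ρ) * (N : ℝ) ^ (σ - α) := by
        field_simp
        ring

lemma exists_div_rpow_le (hf : IsAlmostHomogeneous f d α σ) (hd : d ≠ 0) (hσ : 0 ≤ σ)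
    (hσα : σ < α) : ∃ B : ℝ, 0 ≤ B ∧ ∀ k : ℕ, f k / (k : ℝ) ^ α ≤ B := by
  obtain ⟨A, hA, hcorr⟩ := hf.exists_antitone_correction hd hσ hσα
  set G : ℕ → ℝ := fun k => f k / (k : ℝ) ^ α + A * (k : ℝ) ^ (σ - α)
  have hle : ∀ k, f k / (k : ℝ) ^ α ≤ G k := fun k => le_add_of_nonneg_right (by positivity)
  have hG : ∀ k, 0 ≤ G k := fun k => (div_nonneg (hf.nonneg k) (by positivity)).trans (hle k)
  have hsum : ∀ k < 2 ^ d, G k ≤ ∑ t ∈ Finset.range (2 ^ d), G t := fun k hk =>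
    Finset.single_le_sum (fun t _ => hG t) (Finset.mem_range.2 hk)
  refine ⟨∑ t ∈ Finset.range (2 ^ d), G t, Finset.sum_nonneg fun t _ => hG t, fun k => ?_⟩
  rcases Nat.eq_zero_or_pos k with rfl | hk
  · exact (hle 0).trans (hsum 0 (by positivity))
  · exact (hle k).trans (le_of_le_window (Nat.one_lt_two_pow hd) hcorr le_rfl
      (fun t _ ht => hsum t (by simpa only [mul_one] using ht)) hk)

lemma exists_le_mul_rpow_add (hf : IsAlmostHomogeneous f d α σ) (hd : d ≠ 0) (hσ : 0 ≤ σ)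
    (hσα : σ < α) : ∃ B : ℝ, 0 ≤ B ∧ ∀ k : ℕ, f k ≤ B * (k : ℝ) ^ α + f 0 := by
  obtain ⟨B, hB, hle⟩ := hf.exists_div_rpow_le hd hσ hσα
  refine ⟨B, hB, fun k => ?_⟩
  rcases Nat.eq_zero_or_pos k with rfl | hk
  · exact le_add_of_nonneg_left (by positivity)
  · have := (div_le_iff₀ (by positivity)).1 (hle k)
    linarith [hf.nonneg 0]

lemma exists_eventually_window_le (hf : IsAlmostHomogeneous f d α σ) (hd : d ≠ 0) (hσ : 0 ≤ σ)
    (hσα : σ < α) :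
    ∃ B : ℝ, ∀ ε > 0, ∀ m : ℕ, 1 ≤ m → ∀ᶠ N : ℕ in atTop, ∀ t : ℕ,
      m ^ d * N ≤ t → t < (m + 1) ^ d * N →
        f t / (t : ℝ) ^ α ≤ f N / (N : ℝ) ^ α + B * ((1 + 1 / (m : ℝ)) ^ d - 1) ^ α + ε := by
  have hα : 0 < α := hσ.trans_lt hσα
  obtain ⟨B, hB, hbound⟩ := hf.exists_le_mul_rpow_add hd hσ hσα
  refine ⟨B, fun ε hε m hm => ?_⟩
  obtain ⟨C, _, hC⟩ := hf.exists_div_rpow_add_le hα.le hm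
  have hsmall : ∀ᶠ N : ℕ in atTop, C * (N : ℝ) ^ (σ - α) + f 0 / ((m ^ d * N : ℕ) : ℝ) ^ α < ε := by
    have herror := tendsto_natCast_rpow_of_neg (sub_neg.2 hσα)
    have hconst : Tendsto (fun N : ℕ => f 0 / ((m ^ d * N : ℕ) : ℝ) ^ α) atTop (nhds 0) :=
      ((tendsto_rpow_atTop hα).comp (tendsto_natCast_atTop_atTop.comp
        (tendsto_id.const_mul_atTop' (by positivity)))).const_div_atTop (f 0)
    exact ((herror.const_mul C).add hconst).eventually_lt_const (by simpa using hε)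
  filter_upwards [hsmall, eventually_ge_atTop 1] with N hsmall hN t hmt htm
  obtain ⟨s, rfl⟩ := Nat.exists_eq_add_of_le hmt
  have hδ : 0 ≤ (1 + 1 / (m : ℝ)) ^ d - 1 := sub_nonneg.2 (one_le_pow₀ (by simp))
  have hs : (s : ℝ) ≤ (m ^ d * N : ℕ) * ((1 + 1 / (m : ℝ)) ^ d - 1) := by
    have hpow : (m : ℝ) ^ d * (1 + 1 / (m : ℝ)) ^ d = ((m : ℝ) + 1) ^ d := by
      rw [← mul_pow]
      congr 1
      field_simp
    have : (m : ℝ) ^ d * N + s < ((m : ℝ) + 1) ^ d * N := by exact_mod_cast htm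
    push_cast
    linear_combination this.le - N * hpow
  have hrest : f s / ((m ^ d * N : ℕ) : ℝ) ^ α ≤
      B * ((1 + 1 / (m : ℝ)) ^ d - 1) ^ α + f 0 / ((m ^ d * N : ℕ) : ℝ) ^ α := by
    have hsα := Real.rpow_le_rpow (by positivity) hs hα.le
    rw [Real.mul_rpow (by positivity) hδ] at hsα
    have hpos : 0 < ((m ^ d * N : ℕ) : ℝ) ^ α := by positivity
    rw [div_le_iff₀ hpos, add_mul, div_mul_cancel₀ _ hpos.ne']
    linarith [hbound s, mul_le_mul_of_nonneg_left hsα hB]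
  linarith [hC N s hN]

lemma exists_eventually_le_add_of_lt (hf : IsAlmostHomogeneous f d α σ) (hd : d ≠ 0)
    (hσ : 0 ≤ σ) (hσα : σ < α) {ε : ℝ} (hε : 0 < ε) :
    ∃ m₀ : ℕ, 1 ≤ m₀ ∧ ∀ᶠ N : ℕ in atTop, ∀ t : ℕ,
      m₀ ^ d * N ≤ t → t < 2 ^ d * (m₀ ^ d * N) →
        f t / (t : ℝ) ^ α ≤ f N / (N : ℝ) ^ α + ε := by
  have hα : 0 < α := hσ.trans_lt hσα
  obtain ⟨B, hwindow⟩ := hf.exists_eventually_window_le hd hσ hσα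
  have hfine : Tendsto (fun m : ℕ => B * ((1 + 1 / (m : ℝ)) ^ d - 1) ^ α) atTop (nhds 0) := by
    have := ((((tendsto_one_div_atTop_nhds_zero_nat (𝕜 := ℝ)).const_add 1).pow d).sub_const
      1).rpow_const (p := α) (Or.inr hα.le)
    simpa [hα.ne'] using this.const_mul B
  obtain ⟨m₀, hm₀⟩ := eventually_atTop.1 <|
    (hfine.eventually_lt_const (half_pos hε)).and (eventually_ge_atTop 1)
  refine ⟨m₀, (hm₀ m₀ le_rfl).2, ?_⟩
  have hall : ∀ m ∈ Finset.Ico m₀ (2 * m₀), ∀ᶠ N : ℕ in atTop, ∀ t : ℕ,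
      m ^ d * N ≤ t → t < (m + 1) ^ d * N →
        f t / (t : ℝ) ^ α ≤ f N / (N : ℝ) ^ α + B * ((1 + 1 / (m : ℝ)) ^ d - 1) ^ α + ε / 2 :=
    fun m hm => hwindow _ (half_pos hε) m (hm₀ m (Finset.mem_Ico.1 hm).1).2
  filter_upwards [(Filter.eventually_all_finset _).2 hall, eventually_ge_atTop 1]
    with N hwin hN t h₁ h₂
  obtain ⟨m, hm, hmt, htm⟩ := exists_pow_mul_le_lt hd hN h₁ h₂
  linarith [hwin m hm t hmt htm, (hm₀ m (Finset.mem_Ico.1 hm).1).1]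

lemma eventually_eventually_le_add (hf : IsAlmostHomogeneous f d α σ) (hd : d ≠ 0)
    (hσ : 0 ≤ σ) (hσα : σ < α) {ε : ℝ} (hε : 0 < ε) :
    ∀ᶠ N : ℕ in atTop, ∀ᶠ k : ℕ in atTop,
      f k / (k : ℝ) ^ α ≤ f N / (N : ℝ) ^ α + ε := by
  obtain ⟨A, hA, hcorr⟩ := hf.exists_antitone_correction hd hσ hσα
  obtain ⟨m₀, hm₀, hwindow⟩ := hf.exists_eventually_le_add_of_lt hd hσ hσα (half_pos hε)
  have hsmall : ∀ᶠ N : ℕ in atTop, A * (N : ℝ) ^ (σ - α) < ε / 2 :=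
    ((tendsto_natCast_rpow_of_neg (sub_neg.2 hσα)).const_mul A).eventually_lt_const
      (by simpa using hε)
  filter_upwards [hwindow, hsmall, eventually_ge_atTop 1] with N hwindow hsmall hN
  filter_upwards [eventually_ge_atTop (m₀ ^ d * N)] with k hk
  refine (le_add_of_nonneg_right (a := f k / (k : ℝ) ^ α) (by positivity)).trans
    (le_of_le_window (Nat.one_lt_two_pow hd) hcorr (Nat.mul_pos (by positivity) hN)
      (fun t h₁ h₂ => ?_) hk)
  have hNt : (t : ℝ) ^ (σ - α) ≤ (N : ℝ) ^ (σ - α) :=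
    Real.rpow_le_rpow_of_nonpos (by exact_mod_cast hN)
      (by exact_mod_cast (Nat.le_mul_of_pos_left N (by positivity)).trans h₁) (by linarith)
  linarith [hwindow t h₁ h₂, mul_le_mul_of_nonneg_left hNt hA]

theorem exists_tendsto_div_rpow (hf : IsAlmostHomogeneous f d α σ) (hd : d ≠ 0) (hσ : 0 ≤ σ)
    (hσα : σ < α) :
    ∃ β : ℝ, Tendsto (fun N : ℕ => f N / (N : ℝ) ^ α) atTop (nhds β) :=
  exists_tendsto_of_eventually_le_add
    (isBoundedUnder_of ⟨0, fun n => div_nonneg (hf.nonneg n) (by positivity)⟩)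
    (fun _ => hf.eventually_eventually_le_add hd hσ hσα)

end IsAlmostHomogeneous

end AlmostHomogeneous

section Matching

open scoped Finset symmDiff

variable {ι κ ι' κ' : Type*}

/-- A matching between two index sets, encoded as the finite set of its edges: no index is the
first, or the second, entry of two different edges. -/
structure IsMatching (M : Finset (ι × κ)) : Prop where
  injOn_fst : Set.InjOn Prod.fst (M : Set (ι × κ))
  injOn_snd : Set.InjOn Prod.snd (M : Set (ι × κ))

/-- The matchings that pair `min #A #B` elements of `A` with elements of `B`. -/
def fullMatchings (A : Finset ι) (B : Finset κ) : Set (Finset (ι × κ)) :=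
  {M | IsMatching M ∧ M ⊆ A ×ˢ B ∧ #M = min #A #B}

namespace IsMatching

variable {M N : Finset (ι × κ)} {A : Finset ι} {B : Finset κ}

lemma mono (hM : IsMatching M) (h : N ⊆ M) : IsMatching N :=
  ⟨hM.injOn_fst.mono h, hM.injOn_snd.mono h⟩

lemma insert [DecidableEq ι] [DecidableEq κ] (hM : IsMatching M) {i : ι} {j : κ}
    (hi : i ∉ M.image Prod.fst) (hj : j ∉ M.image Prod.snd) :
    IsMatching (Insert.insert (i, j) M) := by
  have hij : (i, j) ∉ (M : Set (ι × κ)) := fun h => hi (Finset.mem_image_of_mem Prod.fst h)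
  constructor <;> rw [Finset.coe_insert, Set.injOn_insert hij, ← Finset.coe_image, Finset.mem_coe]
  exacts [⟨hM.injOn_fst, hi⟩, ⟨hM.injOn_snd, hj⟩]

lemma card_filter_fst_le (hM : IsMatching M) (p : ι → Prop) [DecidablePred p] (hMA : M ⊆ A ×ˢ B) :
    #{e ∈ M | p e.1} ≤ #{i ∈ A | p i} :=
  Finset.card_le_card_of_injOn Prod.fst
    (fun e he => by
      obtain ⟨heM, hpe⟩ := Finset.mem_filter.1 he
      exact Finset.mem_filter.2 ⟨(Finset.mem_product.1 (hMA heM)).1, hpe⟩)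
    (hM.injOn_fst.mono (Finset.filter_subset _ _))

lemma card_filter_snd_le (hM : IsMatching M) (p : κ → Prop) [DecidablePred p] (hMA : M ⊆ A ×ˢ B) :
    #{e ∈ M | p e.2} ≤ #{j ∈ B | p j} :=
  Finset.card_le_card_of_injOn Prod.snd
    (fun e he => by
      obtain ⟨heM, hpe⟩ := Finset.mem_filter.1 he
      exact Finset.mem_filter.2 ⟨(Finset.mem_product.1 (hMA heM)).2, hpe⟩)
    (hM.injOn_snd.mono (Finset.filter_subset _ _))

lemma card_le (hM : IsMatching M) (hMA : M ⊆ A ×ˢ B) : #M ≤ min #A #B :=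
  le_min (by simpa using hM.card_filter_fst_le (fun _ => True) hMA)
    (by simpa using hM.card_filter_snd_le (fun _ => True) hMA)

lemma exists_superset (hM : IsMatching M) (hMA : M ⊆ A ×ˢ B) :
    ∃ M' ∈ fullMatchings A B, M ⊆ M' := by
  classical
  obtain ⟨M', hMM', hmax⟩ := Finset.exists_le_maximal ({N ∈ (A ×ˢ B).powerset | IsMatching N})
    (Finset.mem_filter.2 ⟨Finset.mem_powerset.2 hMA, hM⟩)
  obtain ⟨hM'A, hM'⟩ := Finset.mem_filter.1 hmax.prop
  rw [Finset.mem_powerset] at hM'A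
  refine ⟨M', ⟨hM', hM'A, (hM'.card_le hM'A).antisymm (not_lt.1 fun hlt => ?_)⟩, hMM'⟩
  obtain ⟨i, hiA, hi⟩ := Finset.exists_mem_notMem_of_card_lt_card
    (Finset.card_image_le.trans_lt (lt_min_iff.1 hlt).1 : #(M'.image Prod.fst) < #A)
  obtain ⟨j, hjB, hj⟩ := Finset.exists_mem_notMem_of_card_lt_card
    (Finset.card_image_le.trans_lt (lt_min_iff.1 hlt).2 : #(M'.image Prod.snd) < #B)
  have hins : Insert.insert (i, j) M' ⊆ M' := hmax.le_of_ge
    (Finset.mem_filter.2 ⟨Finset.mem_powerset.2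
      (Finset.insert_subset (Finset.mk_mem_product hiA hjB) hM'A), hM'.insert hi hj⟩)
    (Finset.subset_insert _ _)
  exact hi (Finset.mem_image_of_mem Prod.fst (hins (Finset.mem_insert_self _ _)))

lemma biUnion [DecidableEq ι] [DecidableEq κ] {τ : Type*} (s : Finset τ)
    {M : τ → Finset (ι × κ)} (hM : ∀ c ∈ s, IsMatching (M c)) (K : ι → τ) (K' : κ → τ)
    (hK : ∀ c ∈ s, ∀ e ∈ M c, K e.1 = c) (hK' : ∀ c ∈ s, ∀ e ∈ M c, K' e.2 = c) :
    IsMatching (s.biUnion M) := by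
  constructor <;> intro e he e' he' h <;> simp only [Finset.coe_biUnion, Set.mem_iUnion₂] at he he'
    <;> obtain ⟨c, hc, he⟩ := he <;> obtain ⟨c', hc', he'⟩ := he'
  · obtain rfl : c = c' := by rw [← hK c hc e he, ← hK c' hc' e' he', h]
    exact (hM c hc).injOn_fst he he' h
  · obtain rfl : c = c' := by rw [← hK' c hc e he, ← hK' c' hc' e' he', h]
    exact (hM c hc).injOn_snd he he' h

end IsMatching

lemma isMatching_map {M : Finset (ι × κ)} (a : ι ↪ ι') (b : κ ↪ κ') :
    IsMatching (M.map (a.prodMap b)) ↔ IsMatching M := by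
  have hfst : Set.InjOn Prod.fst (M.map (a.prodMap b) : Set (ι' × κ')) ↔
      Set.InjOn Prod.fst (M : Set (ι × κ)) := by
    simp only [Set.InjOn, Finset.coe_map, Set.forall_mem_image, Function.Embedding.coe_prodMap,
      Prod.map_fst, a.injective.eq_iff, (a.injective.prodMap b.injective).eq_iff]
  have hsnd : Set.InjOn Prod.snd (M.map (a.prodMap b) : Set (ι' × κ')) ↔
      Set.InjOn Prod.snd (M : Set (ι × κ)) := by
    simp only [Set.InjOn, Finset.coe_map, Set.forall_mem_image, Function.Embedding.coe_prodMap,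
      Prod.map_snd, b.injective.eq_iff, (a.injective.prodMap b.injective).eq_iff]
  exact ⟨fun h => ⟨hfst.1 h.injOn_fst, hsnd.1 h.injOn_snd⟩,
    fun h => ⟨hfst.2 h.injOn_fst, hsnd.2 h.injOn_snd⟩⟩

lemma fullMatchings_map (a : ι ↪ ι') (b : κ ↪ κ') (A : Finset ι) (B : Finset κ) :
    fullMatchings (A.map a) (B.map b) = Finset.map (a.prodMap b) '' fullMatchings A B := by
  ext M
  constructor
  · rintro ⟨hM, hMA, hcard⟩
    rw [← Finset.prodMap_map_product, Finset.subset_map_iff] at hMA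
    obtain ⟨M, hMA, rfl⟩ := hMA
    exact ⟨M, ⟨(isMatching_map a b).1 hM, hMA, by simpa using hcard⟩, rfl⟩
  · rintro ⟨M, ⟨hM, hMA, hcard⟩, rfl⟩
    refine ⟨(isMatching_map a b).2 hM, ?_, by simpa using hcard⟩
    rw [← Finset.prodMap_map_product]
    exact Finset.map_subset_map.2 hMA

lemma fullMatchings_nonempty (A : Finset ι) (B : Finset κ) : (fullMatchings A B).Nonempty :=
  let ⟨M, hM, _⟩ := IsMatching.exists_superset (M := (∅ : Finset (ι × κ)))
    ⟨by simp, by simp⟩ (Finset.empty_subset (A ×ˢ B))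
  ⟨M, hM⟩

/-- The total length of the edges of `M`, read as pairs of points of `X` and `Y`. -/
def matchingLength {E : Type*} [PseudoMetricSpace E] (X : ι → E) (Y : κ → E)
    (M : Finset (ι × κ)) : ℝ :=
  ∑ e ∈ M, dist (X e.1) (Y e.2)

variable {d n₁ n₂ : ℕ} {X : Fin n₁ → EuclideanSpace ℝ (Fin d)}
  {Y : Fin n₂ → EuclideanSpace ℝ (Fin d)} {A A' : Finset (Fin n₁)} {B B' : Finset (Fin n₂)}

lemma LMBMon_eq_sInf :
    LMBMon X Y A B = sInf (matchingLength X Y '' fullMatchings A B) := by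
  rw [LMBMon]
  congr 1
  ext r
  constructor
  · rintro ⟨σ, τ, hσ, hτ, rfl⟩
    let f : Fin (min #A #B) ↪ Fin n₁ × Fin n₂ :=
      ⟨fun i => (σ i, τ i), fun i j h => σ.injective (congrArg Prod.fst h)⟩
    refine ⟨Finset.univ.map f, ⟨⟨?_, ?_⟩, ?_, ?_⟩, Finset.sum_map _ _ _⟩
    · rw [Finset.coe_map]
      exact Set.InjOn.image_of_comp (f := f) σ.injective.injOn
    · rw [Finset.coe_map]
      exact Set.InjOn.image_of_comp (f := f) τ.injective.injOn
    · intro e he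
      obtain ⟨i, -, rfl⟩ := Finset.mem_map.1 he
      exact Finset.mk_mem_product (hσ i) (hτ i)
    · rw [Finset.card_map, Finset.card_univ, Fintype.card_fin]
  · rintro ⟨M, ⟨hM, hMA, hcard⟩, rfl⟩
    let e := M.equivFinOfCardEq hcard
    refine ⟨⟨fun i => (e.symm i).1.1, fun i j h => e.symm.injective (Subtype.ext
      (hM.injOn_fst (e.symm i).2 (e.symm j).2 h))⟩, ⟨fun i => (e.symm i).1.2, fun i j h =>
      e.symm.injective (Subtype.ext (hM.injOn_snd (e.symm i).2 (e.symm j).2 h))⟩,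
      fun i => (Finset.mem_product.1 (hMA (e.symm i).2)).1,
      fun i => (Finset.mem_product.1 (hMA (e.symm i).2)).2, ?_⟩
    rw [matchingLength, ← Finset.sum_coe_sort M, ← e.symm.sum_comp]
    rfl

lemma isLeast_LMBMon :
    IsLeast (matchingLength X Y '' fullMatchings A B) (LMBMon X Y A B) := by
  have hfin : (matchingLength X Y '' fullMatchings A B).Finite := Set.toFinite _
  rw [LMBMon_eq_sInf]
  exact ⟨((fullMatchings_nonempty A B).image _).csInf_mem hfin,
    fun r hr => csInf_le hfin.bddBelow hr⟩

lemma exists_matchingLength_eq_LMBMon (X : Fin n₁ → EuclideanSpace ℝ (Fin d))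
    (Y : Fin n₂ → EuclideanSpace ℝ (Fin d)) (A : Finset (Fin n₁)) (B : Finset (Fin n₂)) :
    ∃ M ∈ fullMatchings A B, matchingLength X Y M = LMBMon X Y A B :=
  isLeast_LMBMon.1

lemma LMBMon_le_matchingLength {M : Finset (Fin n₁ × Fin n₂)} (hM : M ∈ fullMatchings A B) :
    LMBMon X Y A B ≤ matchingLength X Y M :=
  isLeast_LMBMon.2 ⟨M, hM, rfl⟩

lemma LMBMon_eq_iInf (X : Fin n₁ → EuclideanSpace ℝ (Fin d))
    (Y : Fin n₂ → EuclideanSpace ℝ (Fin d)) (A : Finset (Fin n₁)) (B : Finset (Fin n₂)) :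
    LMBMon X Y A B = ⨅ M : fullMatchings A B, matchingLength X Y M := by
  rw [LMBMon_eq_sInf, sInf_image']

lemma LMBMon_nonneg : 0 ≤ LMBMon X Y A B := by
  obtain ⟨M, -, hM⟩ := exists_matchingLength_eq_LMBMon X Y A B
  exact hM ▸ Finset.sum_nonneg fun e _ => dist_nonneg

lemma LMBMon_map {m₁ m₂ : ℕ} (a : Fin m₁ ↪ Fin n₁) (b : Fin m₂ ↪ Fin n₂)
    (A : Finset (Fin m₁)) (B : Finset (Fin m₂)) :
    LMBMon X Y (A.map a) (B.map b) = LMBMon (X ∘ a) (Y ∘ b) A B := by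
  rw [LMBMon_eq_sInf, LMBMon_eq_sInf, fullMatchings_map, Set.image_image]
  simp only [matchingLength, Finset.sum_map]
  rfl

lemma LMBMon_le_mul {d' : ℕ} {X' : Fin n₁ → EuclideanSpace ℝ (Fin d')}
    {Y' : Fin n₂ → EuclideanSpace ℝ (Fin d')} {r : ℝ}
    (h : ∀ i ∈ A, ∀ j ∈ B, dist (X i) (Y j) ≤ r * dist (X' i) (Y' j)) :
    LMBMon X Y A B ≤ r * LMBMon X' Y' A B := by
  obtain ⟨M, hM, hlen⟩ := exists_matchingLength_eq_LMBMon X' Y' A B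
  refine (LMBMon_le_matchingLength hM).trans ?_
  rw [← hlen, matchingLength, matchingLength, Finset.mul_sum]
  refine Finset.sum_le_sum fun e he => ?_
  obtain ⟨hi, hj⟩ := Finset.mem_product.1 (hM.2.1 he)
  exact h _ hi _ hj

lemma LMBMon_le_add_card {D : ℝ} (hD : ∀ i ∈ A, ∀ j ∈ B, dist (X i) (Y j) ≤ D)
    {M : Finset (Fin n₁ × Fin n₂)} (hM : IsMatching M) (hMA : M ⊆ A ×ˢ B) :
    LMBMon X Y A B ≤ matchingLength X Y M + D * ((min #A #B : ℕ) - #M : ℝ) := by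
  obtain ⟨M', hM', hMM'⟩ := hM.exists_superset hMA
  calc LMBMon X Y A B ≤ matchingLength X Y M' := LMBMon_le_matchingLength hM'
    _ = matchingLength X Y M + ∑ e ∈ M' \ M, dist (X e.1) (Y e.2) := by
        rw [matchingLength, matchingLength, add_comm, Finset.sum_sdiff hMM']
    _ ≤ matchingLength X Y M + #(M' \ M) • D := by
        gcongr
        refine Finset.sum_le_card_nsmul _ _ _ fun e he => ?_
        obtain ⟨hi, hj⟩ := Finset.mem_product.1 (hM'.2.1 (Finset.mem_sdiff.1 he).1)
        exact hD _ hi _ hj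
    _ = matchingLength X Y M + D * ((min #A #B : ℕ) - #M : ℝ) := by
        rw [nsmul_eq_mul, Finset.cast_card_sdiff hMM', hM'.2.2, mul_comm]

lemma LMBMon_le_mul_card {D : ℝ} (hD : ∀ i ∈ A, ∀ j ∈ B, dist (X i) (Y j) ≤ D) :
    LMBMon X Y A B ≤ D * (min #A #B : ℕ) := by
  simpa [matchingLength] using
    LMBMon_le_add_card hD (M := ∅) ⟨by simp, by simp⟩ (Finset.empty_subset _)

lemma LMBMon_le_add_card_symmDiff {D : ℝ} (hD₀ : 0 ≤ D) (hD : ∀ i j, dist (X i) (Y j) ≤ D) :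
    LMBMon X Y A B ≤ LMBMon X Y A' B' + D * (#(A ∆ A') + #(B ∆ B')) := by
  obtain ⟨M, ⟨hM, hMA, hcard⟩, hlen⟩ := exists_matchingLength_eq_LMBMon X Y A' B'
  set M₀ := {e ∈ M | e.1 ∈ A ∧ e.2 ∈ B}
  have hM₀M : M₀ ⊆ M := Finset.filter_subset _ _
  have hM₀ : M₀ ⊆ A ×ˢ B := fun e he => Finset.mem_product.2 (Finset.mem_filter.1 he).2
  have hlen₀ : matchingLength X Y M₀ ≤ LMBMon X Y A' B' :=
    hlen ▸ Finset.sum_le_sum_of_subset_of_nonneg hM₀M fun e _ _ => dist_nonneg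
  have hlost : #M ≤ #M₀ + (#(A' \ A) + #(B' \ B)) := by
    have hlost_fst := hM.card_filter_fst_le (· ∉ A) hMA
    have hlost_snd := hM.card_filter_snd_le (· ∉ B) hMA
    have hcover : M \ M₀ ⊆ {e ∈ M | e.1 ∉ A} ∪ {e ∈ M | e.2 ∉ B} := by grind
    rw [← Finset.sdiff_eq_filter] at hlost_fst hlost_snd
    have hcard_sdiff := (Finset.card_le_card hcover).trans (Finset.card_union_le _ _)
    have hcard_add := Finset.card_sdiff_add_card_eq_card hM₀M
    lia
  have hA : #(A ∆ A') = #(A \ A') + #(A' \ A) :=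
    Finset.card_union_of_disjoint disjoint_sdiff_sdiff
  have hB : #(B ∆ B') = #(B \ B') + #(B' \ B) :=
    Finset.card_union_of_disjoint disjoint_sdiff_sdiff
  have hA' : #A ≤ #(A \ A') + #A' := Finset.card_le_card_sdiff_add_card
  have hB' : #B ≤ #(B \ B') + #B' := Finset.card_le_card_sdiff_add_card
  have hmin : min #A #B ≤ #M₀ + (#(A ∆ A') + #(B ∆ B')) := by lia
  have hmin' : ((min #A #B : ℕ) : ℝ) ≤ #M₀ + (#(A ∆ A') + #(B ∆ B')) := by exact_mod_cast hmin
  calc LMBMon X Y A B ≤ matchingLength X Y M₀ + D * ((min #A #B : ℕ) - #M₀ : ℝ) :=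
        LMBMon_le_add_card (fun i _ j _ => hD i j) (hM.mono hM₀M) hM₀
    _ ≤ LMBMon X Y A' B' + D * (#(A ∆ A') + #(B ∆ B')) := by
        gcongr
        linarith

lemma LMBM_le_sum_add {τ : Type*} [Fintype τ] [DecidableEq τ] {D : ℝ} (hD₀ : 0 ≤ D)
    (hD : ∀ i j, dist (X i) (Y j) ≤ D) (K : Fin n₁ → τ) (K' : Fin n₂ → τ) :
    LMBM X Y ≤ ∑ c, LMBMon X Y {i | K i = c} {j | K' j = c} +
      D * ∑ c, |(#{i | K i = c} : ℝ) - #{j | K' j = c}| := by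
  choose M hM hlen using fun c =>
    exists_matchingLength_eq_LMBMon X Y {i | K i = c} {j | K' j = c}
  have hK : ∀ c, ∀ e ∈ M c, K e.1 = c ∧ K' e.2 = c := fun c e he => by
    simpa using (hM c).2.1 he
  have hdisj : ((Finset.univ : Finset τ) : Set τ).PairwiseDisjoint M := fun c _ c' _ hcc' =>
    Finset.disjoint_left.2 fun e he he' => hcc' ((hK c e he).1.symm.trans (hK c' e he').1)
  have hmatch : IsMatching (Finset.univ.biUnion M) := IsMatching.biUnion _ (fun c _ => (hM c).1)
    K K' (fun c _ e he => (hK c e he).1) (fun c _ e he => (hK c e he).2)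
  have hcard : (min n₁ n₂ : ℕ) - (#(Finset.univ.biUnion M) : ℝ) ≤
      ∑ c, |(#{i | K i = c} : ℝ) - #{j | K' j = c}| := by
    have hn : (n₁ : ℝ) = ∑ c, (#{i | K i = c} : ℝ) := by
      exact_mod_cast (Fintype.card_fin n₁).symm.trans
        (Finset.card_eq_sum_card_fiberwise (f := K) (fun _ _ => Finset.mem_univ _))
    rw [Finset.card_biUnion hdisj, sub_le_iff_le_add, Nat.cast_sum, ← Finset.sum_add_distrib]
    refine (Nat.cast_le.2 (min_le_left _ _)).trans (hn.trans_le (Finset.sum_le_sum fun c _ => ?_))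
    rw [(hM c).2.2, Nat.cast_min]
    rcases le_total (#{i | K i = c} : ℝ) (#{j | K' j = c}) with h | h
    · rw [min_eq_left h]
      linarith [abs_nonneg ((#{i | K i = c} : ℝ) - #{j | K' j = c})]
    · rw [min_eq_right h]
      linarith [le_abs_self ((#{i | K i = c} : ℝ) - #{j | K' j = c})]
  calc LMBM X Y ≤ matchingLength X Y (Finset.univ.biUnion M)
        + D * ((min n₁ n₂ : ℕ) - #(Finset.univ.biUnion M) : ℝ) := by
        simpa only [LMBM, Finset.card_univ, Fintype.card_fin] using
          LMBMon_le_add_card (A := Finset.univ) (B := Finset.univ) (fun i _ j _ => hD i j) hmatch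
            (Finset.subset_univ _)
    _ ≤ _ := by
        rw [matchingLength, Finset.sum_biUnion hdisj]
        refine add_le_add (Finset.sum_le_sum fun c _ => (hlen c).le) ?_
        gcongr

end Matching

section UnitCube

open scoped ENNReal

variable {d : ℕ}

lemma unitCube_eq_preimage_Icc (d : ℕ) :
    unitCube d = WithLp.ofLp ⁻¹' Set.Icc (fun _ : Fin d => (0 : ℝ)) fun _ => 1 := by
  ext x
  simp only [unitCube, Set.mem_Icc, Set.mem_preimage, Pi.le_def, Set.mem_ofPred_eq, forall_and]

lemma measurableSet_unitCube (d : ℕ) : MeasurableSet (unitCube d) := by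
  rw [unitCube_eq_preimage_Icc]
  exact measurableSet_Icc.preimage (by fun_prop)

instance : IsProbabilityMeasure (unifCube d) where
  measure_univ := by
    rw [unifCube, Measure.restrict_apply_univ, unitCube_eq_preimage_Icc,
      (PiLp.volume_preserving_ofLp (Fin d)).measure_preimage measurableSet_Icc.nullMeasurableSet,
      Real.volume_Icc_pi]
    simp

lemma ae_mem_unitCube (d : ℕ) : ∀ᵐ x ∂unifCube d, x ∈ unitCube d :=
  ae_restrict_mem (measurableSet_unitCube d)

lemma dist_le_sqrt_of_mem_unitCube {x y : EuclideanSpace ℝ (Fin d)} (hx : x ∈ unitCube d)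
    (hy : y ∈ unitCube d) : dist x y ≤ √d := by
  rw [EuclideanSpace.dist_eq]
  refine Real.sqrt_le_sqrt ?_
  calc ∑ i, dist (x i) (y i) ^ 2 ≤ ∑ _i : Fin d, (1 : ℝ) :=
        Finset.sum_le_sum fun i _ => pow_le_one₀ dist_nonneg <|
          (Real.dist_le_of_mem_Icc (hx i) (hy i)).trans_eq (sub_zero 1)
    _ = d := by simp

/-- The half-open unit cube `[0,1)^d`; unlike `[0,1]^d` it is a disjoint union of rescaled
translates of itself. -/
def unitCubeIco (d : ℕ) : Set (EuclideanSpace ℝ (Fin d)) :=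
  {x | ∀ i, x i ∈ Set.Ico (0 : ℝ) 1}

lemma unitCubeIco_eq_preimage_pi (d : ℕ) :
    unitCubeIco d = WithLp.ofLp ⁻¹' Set.univ.pi fun _ : Fin d => Set.Ico (0 : ℝ) 1 := by
  ext x
  simp only [unitCubeIco, Set.mem_preimage, Set.mem_univ_pi, Set.mem_ofPred_eq]

lemma measurableSet_unitCubeIco (d : ℕ) : MeasurableSet (unitCubeIco d) := by
  rw [unitCubeIco_eq_preimage_pi]
  exact (MeasurableSet.univ_pi fun _ => measurableSet_Ico).preimage (by fun_prop)

lemma unifCube_eq_restrict_unitCubeIco (d : ℕ) :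
    unifCube d = volume.restrict (unitCubeIco d) := by
  refine Measure.restrict_congr_set ?_
  rw [unitCube_eq_preimage_Icc, unitCubeIco_eq_preimage_pi]
  exact ((PiLp.volume_preserving_ofLp (Fin d)).quasiMeasurePreserving.preimage_ae_eq
    Measure.univ_pi_Ico_ae_eq_Icc).symm

/-- The cell with index `k` in the partition of `[0,1)^d` into `m ^ d` cubes of side `1 / m`. -/
def gridCell {m : ℕ} (k : Fin d → Fin m) : Set (EuclideanSpace ℝ (Fin d)) :=
  {x | ∀ i, ⌊(m : ℝ) * x i⌋ = (k i : ℕ)}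

/-- The similarity taking `[0,1)^d` onto the cell `gridCell k`. -/
noncomputable def gridMap {m : ℕ} (k : Fin d → Fin m) (v : EuclideanSpace ℝ (Fin d)) :
    EuclideanSpace ℝ (Fin d) :=
  (m : ℝ)⁻¹ • (WithLp.toLp 2 (fun i => ((k i : ℕ) : ℝ)) + v)

variable {m : ℕ}

lemma measurableSet_gridCell (k : Fin d → Fin m) : MeasurableSet (gridCell k) := by
  rw [gridCell, Set.ofPred_forall]
  exact MeasurableSet.iInter fun i => measurableSet_eq_fun (by fun_prop) measurable_const

lemma pairwise_disjoint_gridCell :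
    Pairwise (Function.onFun Disjoint (gridCell : (Fin d → Fin m) → Set _)) := by
  intro k k' hkk'
  refine Set.disjoint_left.2 fun x hx hx' => hkk' ?_
  ext i
  exact_mod_cast (hx i).symm.trans (hx' i)

lemma iUnion_gridCell [NeZero m] : ⋃ k : Fin d → Fin m, gridCell k = unitCubeIco d := by
  have hm : (0 : ℝ) < m := Nat.cast_pos.2 (NeZero.pos m)
  have mem_Ico_iff (t : ℝ) : t ∈ Set.Ico 0 1 ↔ 0 ≤ ⌊m * t⌋ ∧ ⌊m * t⌋ < m := by
    rw [Int.floor_nonneg, Int.floor_lt, mul_nonneg_iff_of_pos_left hm, Int.cast_natCast,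
      mul_lt_iff_lt_one_right hm, Set.mem_Ico]
  ext x
  simp only [Set.mem_iUnion, gridCell, unitCubeIco, Set.mem_ofPred_eq, mem_Ico_iff]
  constructor
  · rintro ⟨k, hk⟩ i
    have := (k i).isLt
    have := hk i
    omega
  · intro hx
    refine ⟨fun i => ⟨⌊m * x i⌋.toNat, ?_⟩, fun i => (Int.toNat_of_nonneg (hx i).1).symm⟩
    have := hx i
    omega

lemma gridMap_mem_gridCell_iff [NeZero m] (k : Fin d → Fin m) (v : EuclideanSpace ℝ (Fin d)) :
    gridMap k v ∈ gridCell k ↔ v ∈ unitCubeIco d := by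
  refine forall_congr' fun i => ?_
  have hcoord : (m : ℝ) * gridMap k v i = v i + (k i : ℕ) := by
    rw [gridMap, PiLp.smul_apply, smul_eq_mul, mul_inv_cancel_left₀ (NeZero.ne _), PiLp.add_apply,
      add_comm]
  rw [hcoord, Int.floor_add_natCast, add_eq_right, Int.floor_eq_zero_iff]

lemma dist_gridMap (k : Fin d → Fin m) (v w : EuclideanSpace ℝ (Fin d)) :
    dist (gridMap k v) (gridMap k w) = (m : ℝ)⁻¹ * dist v w := by
  rw [gridMap, gridMap, dist_smul₀, dist_add_left, norm_inv, Real.norm_natCast]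

lemma measurable_gridMap :
    Measurable fun q : (Fin d → Fin m) × EuclideanSpace ℝ (Fin d) => gridMap q.1 q.2 :=
  measurable_from_prod_countable_right fun k => by unfold gridMap; fun_prop

lemma volume_gridMap_preimage [NeZero m] (k : Fin d → Fin m)
    (s : Set (EuclideanSpace ℝ (Fin d))) :
    volume (gridMap k ⁻¹' s) = (m : ℝ≥0∞) ^ d * volume s := by
  have hm : (m : ℝ)⁻¹ ≠ 0 := inv_ne_zero (NeZero.ne _)
  calc volume (gridMap k ⁻¹' s)
      = volume ((fun v => WithLp.toLp 2 (fun i => ((k i : ℕ) : ℝ)) + v) ⁻¹'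
          ((fun v => (m : ℝ)⁻¹ • v) ⁻¹' s)) := rfl
    _ = (m : ℝ≥0∞) ^ d * volume s := by
      rw [measure_preimage_add, Measure.addHaar_preimage_smul _ hm, finrank_euclideanSpace_fin,
        inv_pow, inv_inv, abs_of_nonneg (by positivity), ENNReal.ofReal_pow (by positivity),
        ENNReal.ofReal_natCast]

lemma unifCube_gridMap_preimage [NeZero m] (k : Fin d → Fin m)
    (s : Set (EuclideanSpace ℝ (Fin d))) :
    unifCube d (gridMap k ⁻¹' s) = (m : ℝ≥0∞) ^ d * volume (s ∩ gridCell k) := by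
  rw [unifCube_eq_restrict_unitCubeIco, Measure.restrict_apply' (measurableSet_unitCubeIco d),
    ← volume_gridMap_preimage k]
  congr 1
  ext v
  simp only [Set.mem_inter_iff, Set.mem_preimage, gridMap_mem_gridCell_iff]

lemma uniformOn_univ_eq_smul_count (κ : Type*) [Fintype κ] [MeasurableSpace κ] :
    uniformOn (Set.univ : Set κ) = (Fintype.card κ : ℝ≥0∞)⁻¹ • Measure.count := by
  rw [uniformOn, ProbabilityTheory.cond, Measure.restrict_univ, Measure.count_univ,
    ENat.card_eq_coe_fintype_card, ENat.toENNReal_coe]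

lemma measurePreserving_gridMap [NeZero m] :
    MeasurePreserving (fun q : (Fin d → Fin m) × EuclideanSpace ℝ (Fin d) => gridMap q.1 q.2)
      ((uniformOn Set.univ).prod (unifCube d)) (unifCube d) := by
  refine ⟨measurable_gridMap, Measure.ext fun s hs => ?_⟩
  rw [Measure.map_apply measurable_gridMap hs, Measure.prod_apply (measurable_gridMap hs),
    uniformOn_univ_eq_smul_count, lintegral_smul_measure, lintegral_count, tsum_fintype]
  simp only [Set.preimage_preimage, unifCube_gridMap_preimage]
  rw [← Finset.mul_sum, smul_eq_mul, ← mul_assoc, Fintype.card_pi_const, Fintype.card_fin,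
    Nat.cast_pow, ENNReal.inv_mul_cancel (pow_ne_zero _ (NeZero.ne _)) (by finiteness), one_mul,
    unifCube_eq_restrict_unitCubeIco, ← iUnion_gridCell (m := m),
    Measure.restrict_iUnion_apply pairwise_disjoint_gridCell measurableSet_gridCell hs,
    tsum_fintype]
  exact Finset.sum_congr rfl fun k _ => (Measure.restrict_apply hs).symm

end UnitCube

section Deviation

open scoped Finset

lemma integral_abs_sub_integral_le_sqrt_variance {Ω : Type*} [MeasurableSpace Ω] {P : Measure Ω}
    [IsProbabilityMeasure P] {X : Ω → ℝ} (hX : MemLp X 2 P) :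
    ∫ ω, |X ω - P[X]| ∂P ≤ √Var[X; P] := by
  have hdev : MemLp (fun ω => |X ω - P[X]|) 2 P := (hX.sub (memLp_const _)).abs
  refine Real.le_sqrt_of_sq_le (sub_nonneg.1 ?_)
  calc (0 : ℝ) ≤ Var[fun ω => |X ω - P[X]|; P] := variance_nonneg _ _
    _ = Var[X; P] - (∫ ω, |X ω - P[X]| ∂P) ^ 2 := by
      rw [variance_eq_sub hdev, variance_eq_integral hX.aestronglyMeasurable.aemeasurable]
      simp only [Pi.pow_apply, sq_abs]

lemma integral_abs_card_filter_eq_sub_le {ι κ : Type*} [Fintype ι] [MeasurableSpace κ]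
    [MeasurableSingletonClass κ] [DecidableEq κ] (ρ : Measure κ) [IsProbabilityMeasure ρ]
    (c : κ) :
    ∫ K : ι → κ, |(#{i | K i = c} : ℝ) - Fintype.card ι * ρ.real {c}| ∂(Measure.pi fun _ => ρ) ≤
      √(Fintype.card ι * ρ.real {c}) := by
  set hit : κ → ℝ := fun k => if k = c then 1 else 0
  have hhit_eq : hit = Set.indicator {c} 1 := by
    ext k
    simp only [hit, Set.indicator_apply, Set.mem_singleton_iff, Pi.one_apply]
  set X : (ι → κ) → ℝ := ∑ i, fun K => hit (K i) with hX
  have hhit : MemLp hit 2 ρ :=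
    hhit_eq ▸ memLp_indicator_const 2 (measurableSet_singleton c) 1 (.inr (measure_ne_top ρ _))
  have hhit_pi (i : ι) : MemLp (fun K : ι → κ => hit (K i)) 2 (Measure.pi fun _ => ρ) :=
    hhit.comp_measurePreserving (measurePreserving_eval _ i)
  have hcount (K : ι → κ) : (#{i | K i = c} : ℝ) = X K := by
    simp [X, hit]
  have hmean : ∫ K, X K ∂(Measure.pi fun _ => ρ) = Fintype.card ι * ρ.real {c} := by
    simp only [X, Finset.sum_apply]
    rw [integral_finsetSum _ fun i _ => (hhit_pi i).integrable one_le_two]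
    have heval (i : ι) : ∫ K : ι → κ, hit (K i) ∂(Measure.pi fun _ => ρ) = ρ.real {c} := by
      rw [integral_comp_eval hhit.aestronglyMeasurable, hhit_eq,
        integral_indicator_one (measurableSet_singleton c)]
    simp only [heval, Finset.sum_const, Finset.card_univ, nsmul_eq_mul]
  have hvar : Var[X; Measure.pi fun _ => ρ] ≤ Fintype.card ι * ρ.real {c} := by
    have hvar_hit : Var[hit; ρ] ≤ ρ.real {c} := by
      refine (variance_le_expectation_sq hhit.aestronglyMeasurable).trans_eq ?_
      rw [← integral_indicator_one (measurableSet_singleton c), ← hhit_eq]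
      refine integral_congr_ae (.of_forall fun k => ?_)
      simp [hit]
    rw [hX, variance_sum_pi fun _ => hhit, Finset.sum_const, Finset.card_univ, nsmul_eq_mul]
    gcongr
  simp_rw [hcount, ← hmean]
  exact (integral_abs_sub_integral_le_sqrt_variance (memLp_finsetSum' _ fun i _ => hhit_pi i)).trans
    (Real.sqrt_le_sqrt (hvar.trans_eq hmean.symm))

end Deviation

section MeanMatching

open scoped Finset symmDiff

lemma measurePreserving_comp_of_injective {ι ι' α : Type*} [Fintype ι] [Fintype ι']
    [MeasurableSpace α] (μ : Measure α) [IsProbabilityMeasure μ] {g : ι' → ι}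
    (hg : g.Injective) :
    MeasurePreserving (fun v : ι → α => v ∘ g) (Measure.pi fun _ => μ)
      (Measure.pi fun _ => μ) := by
  have hindep : iIndepFun (fun i (v : ι → α) => v i) (Measure.pi fun _ => μ) :=
    iIndepFun_pi (X := fun _ => id) fun _ => aemeasurable_id
  exact ⟨by fun_prop, ((hindep.precomp hg).hasLaw_pi fun i =>
    (measurePreserving_eval (fun _ => μ) (g i)).hasLaw).map_eq⟩

variable {d n₁ n₂ : ℕ}

/-- The law of a family, indexed by `ι`, of independent uniform points of `[0,1]^d`. -/
noncomputable abbrev iidUnif (ι : Type*) [Fintype ι] (d : ℕ) :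
    Measure (ι → EuclideanSpace ℝ (Fin d)) :=
  Measure.pi fun _ => unifCube d

/-- The expected length of a minimum bipartite matching between `n₁` and `n₂` independent
uniform points of `[0,1]^d`. The two families are indexed by the two summands. -/
noncomputable def meanLMBM (d n₁ n₂ : ℕ) : ℝ :=
  ∫ v, LMBM (v ∘ Sum.inl) (v ∘ Sum.inr) ∂iidUnif (Fin n₁ ⊕ Fin n₂) d

lemma ae_forall_mem_unitCube (ι : Type*) [Fintype ι] (d : ℕ) :
    ∀ᵐ v ∂iidUnif ι d, ∀ i, v i ∈ unitCube d :=
  ae_all_iff.2 fun i =>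
    (measurePreserving_eval _ i).quasiMeasurePreserving.ae (ae_mem_unitCube d)

lemma ae_forall_dist_le (ι : Type*) [Fintype ι] (d : ℕ) :
    ∀ᵐ v ∂iidUnif ι d, ∀ i j, dist (v i) (v j) ≤ √d := by
  filter_upwards [ae_forall_mem_unitCube ι d] with v hv i j
  exact dist_le_sqrt_of_mem_unitCube (hv i) (hv j)

lemma measurable_LMBMon (A : Finset (Fin n₁)) (B : Finset (Fin n₂)) :
    Measurable fun v : Fin n₁ ⊕ Fin n₂ → EuclideanSpace ℝ (Fin d) =>
      LMBMon (v ∘ Sum.inl) (v ∘ Sum.inr) A B := by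
  simp only [LMBMon_eq_iInf, matchingLength, Function.comp_apply]
  exact Measurable.iInf fun M => by fun_prop

lemma integral_LMBM_of_hasLaw {Ω : Type*} [MeasurableSpace Ω] {P : Measure Ω}
    {V : Ω → Fin n₁ ⊕ Fin n₂ → EuclideanSpace ℝ (Fin d)}
    (hV : HasLaw V (iidUnif (Fin n₁ ⊕ Fin n₂) d) P) :
    ∫ ω, LMBM (V ω ∘ Sum.inl) (V ω ∘ Sum.inr) ∂P = meanLMBM d n₁ n₂ :=
  hV.integral_comp (measurable_LMBMon _ _).aestronglyMeasurable

lemma integrable_LMBMon (A : Finset (Fin n₁)) (B : Finset (Fin n₂)) :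
    Integrable (fun v => LMBMon (v ∘ Sum.inl) (v ∘ Sum.inr) A B)
      (iidUnif (Fin n₁ ⊕ Fin n₂) d) := by
  refine .of_bound (measurable_LMBMon A B).aestronglyMeasurable (√d * (min #A #B : ℕ)) ?_
  filter_upwards [ae_forall_dist_le _ d] with v hv
  rw [Real.norm_of_nonneg LMBMon_nonneg]
  exact LMBMon_le_mul_card fun i _ j _ => hv _ _

lemma integral_LMBMon (A : Finset (Fin n₁)) (B : Finset (Fin n₂)) :
    ∫ v, LMBMon (v ∘ Sum.inl) (v ∘ Sum.inr) A B ∂iidUnif (Fin n₁ ⊕ Fin n₂) d =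
      meanLMBM d #A #B := by
  obtain ⟨a, hA⟩ : ∃ a : Fin #A ↪ Fin n₁, Finset.univ.map a = A :=
    ⟨_, Finset.map_orderEmbOfFin_univ A rfl⟩
  obtain ⟨b, hB⟩ : ∃ b : Fin #B ↪ Fin n₂, Finset.univ.map b = B :=
    ⟨_, Finset.map_orderEmbOfFin_univ B rfl⟩
  have hmp : MeasurePreserving (fun v => v ∘ Sum.map a b) (iidUnif (Fin n₁ ⊕ Fin n₂) d)
      (iidUnif (Fin #A ⊕ Fin #B) d) :=
    measurePreserving_comp_of_injective _ (Sum.map_injective.2 ⟨a.injective, b.injective⟩)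
  calc ∫ v, LMBMon (v ∘ Sum.inl) (v ∘ Sum.inr) A B ∂iidUnif (Fin n₁ ⊕ Fin n₂) d
      = ∫ v, LMBMon ((v ∘ Sum.map a b) ∘ Sum.inl) ((v ∘ Sum.map a b) ∘ Sum.inr)
          Finset.univ Finset.univ ∂iidUnif (Fin n₁ ⊕ Fin n₂) d := by
        refine integral_congr_ae (.of_forall fun v => ?_)
        conv_lhs => rw [← hA, ← hB]
        exact LMBMon_map a b _ _
    _ = meanLMBM d #A #B := integral_LMBM_of_hasLaw hmp.hasLaw

lemma integral_LMBM_prod (d n₁ n₂ : ℕ) :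
    ∫ p, LMBM p.1 p.2 ∂((iidUnif (Fin n₁) d).prod (iidUnif (Fin n₂) d)) = meanLMBM d n₁ n₂ :=
  ((measurePreserving_sumPiEquivProdPi fun _ : Fin n₁ ⊕ Fin n₂ => unifCube d).integral_comp'
    fun p => LMBM p.1 p.2).symm

lemma meanLMBM_nonneg : 0 ≤ meanLMBM d n₁ n₂ :=
  integral_nonneg fun _ => LMBMon_nonneg

lemma exists_card_symmDiff_eq (a b : ℕ) :
    ∃ n, ∃ A B : Finset (Fin n), #A = a ∧ #B = b ∧ (#(A ∆ B) : ℝ) = |(a : ℝ) - b| := by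
  wlog hab : a ≤ b generalizing a b
  · obtain ⟨n, B, A, hB, hA, hBA⟩ := this b a (le_of_not_ge hab)
    exact ⟨n, A, B, hA, hB, by rw [symmDiff_comm, hBA, abs_sub_comm]⟩
  obtain ⟨A, -, hA⟩ := Finset.exists_subset_card_eq (s := (Finset.univ : Finset (Fin b)))
    (hab.trans_eq (Finset.card_fin b).symm)
  refine ⟨b, A, Finset.univ, hA, Finset.card_fin b, ?_⟩
  rw [← Finset.top_eq_univ, symmDiff_top, hnot_eq_compl, Finset.card_compl, hA,
    Fintype.card_fin, Nat.cast_sub hab, abs_sub_comm, abs_of_nonneg (by simpa using hab)]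

lemma meanLMBM_le_add (d a b a' b' : ℕ) :
    meanLMBM d a b ≤ meanLMBM d a' b' + √d * (|(a : ℝ) - a'| + |(b : ℝ) - b'|) := by
  obtain ⟨n₁, A, A', rfl, rfl, hA⟩ := exists_card_symmDiff_eq a a'
  obtain ⟨n₂, B, B', rfl, rfl, hB⟩ := exists_card_symmDiff_eq b b'
  have hfint := integrable_LMBMon (d := d) A' B'
  suffices h : ∀ᵐ v ∂iidUnif (Fin n₁ ⊕ Fin n₂) d, LMBMon (v ∘ Sum.inl) (v ∘ Sum.inr) A B ≤
      LMBMon (v ∘ Sum.inl) (v ∘ Sum.inr) A' B' + √d * (#(A ∆ A') + #(B ∆ B')) by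
    have hle := integral_mono_ae (integrable_LMBMon A B) (hfint.add (integrable_const _)) h
    rwa [integral_add' hfint (integrable_const _), integral_LMBMon, integral_LMBMon,
      integral_const, probReal_univ, one_smul, hA, hB] at hle
  filter_upwards [ae_forall_dist_le _ d] with v hv
  exact LMBMon_le_add_card_symmDiff (Real.sqrt_nonneg d) fun i j => hv _ _

lemma abs_meanLMBM_sub_le (d a b a' b' : ℕ) :
    |meanLMBM d a b - meanLMBM d a' b'| ≤ √d * (|(a : ℝ) - a'| + |(b : ℝ) - b'|) := by
  have h := meanLMBM_le_add d a b a' b'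
  have h' := meanLMBM_le_add d a' b' a b
  rw [abs_sub_comm (a' : ℝ), abs_sub_comm (b' : ℝ)] at h'
  exact abs_sub_le_iff.2 ⟨by linarith, by linarith⟩

lemma meanLMBM_le_sum {τ : Type*} [Fintype τ] [DecidableEq τ] {n : ℕ} (K : Fin n → τ) :
    meanLMBM d n n ≤ ∑ c, meanLMBM d #{i | K i = c} #{i | K i = c} := by
  simp only [← integral_LMBMon]
  rw [meanLMBM, ← integral_finsetSum _ fun c _ => integrable_LMBMon _ _]
  refine integral_mono_ae (integrable_LMBMon _ _)
    (integrable_finsetSum _ fun c _ => integrable_LMBMon _ _) ?_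
  filter_upwards [ae_forall_dist_le _ d] with v hv
  simpa only [sub_self, abs_zero, Finset.sum_const_zero, mul_zero, add_zero] using
    LMBM_le_sum_add (X := v ∘ Sum.inl) (Y := v ∘ Sum.inr) (Real.sqrt_nonneg d)
      (fun i j => hv _ _) K K

lemma meanLMBM_add_le (d a b : ℕ) :
    meanLMBM d (a + b) (a + b) ≤ meanLMBM d a a + meanLMBM d b b := by
  have hlt : #{i : Fin (a + b) | decide (i.val < a) = true} = a := by
    simp [Fin.card_filter_val_lt]
  have hge : #{i : Fin (a + b) | decide (i.val < a) = false} = b := by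
    have hsum := Finset.card_filter_add_card_filter_not
      (s := (Finset.univ : Finset (Fin (a + b)))) (fun i => i.val < a)
    simp only [decide_eq_true_eq, decide_eq_false_iff_not, Finset.card_univ,
      Fintype.card_fin] at hlt hsum ⊢
    omega
  simpa only [Fintype.sum_bool, hlt, hge] using
    meanLMBM_le_sum (d := d) fun i : Fin (a + b) => decide (i.val < a)

end MeanMatching

section GridRecursion

open scoped Finset

variable {d m n₁ n₂ : ℕ}

lemma uniformOn_univ_real_singleton {κ : Type*} [Fintype κ] [MeasurableSpace κ]
    [MeasurableSingletonClass κ] (c : κ) :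
    (uniformOn Set.univ : Measure κ).real {c} = (Fintype.card κ : ℝ)⁻¹ := by
  simp [Measure.real, uniformOn_univ_eq_smul_count]

lemma measurePreserving_pi_prod {ι κ α β : Type*} [Fintype ι] [MeasurableSpace κ]
    [MeasurableSpace α] [MeasurableSpace β] {ρ : Measure κ} {μ : Measure α} {ν : Measure β}
    [SigmaFinite ρ] [SigmaFinite μ] [SigmaFinite ν] {f : κ → α → β}
    (hf : MeasurePreserving (fun q => f q.1 q.2) (ρ.prod μ) ν) :
    MeasurePreserving (fun (q : (ι → κ) × (ι → α)) i => f (q.1 i) (q.2 i))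
      ((Measure.pi fun _ => ρ).prod (Measure.pi fun _ => μ)) (Measure.pi fun _ => ν) :=
  (measurePreserving_pi (fun _ => ρ.prod μ) (fun _ => ν) fun _ => hf).comp
    (measurePreserving_arrowProdEquivProdArrow κ α ι (fun _ => ρ) fun _ => μ).symm

lemma LMBM_gridMap_le (K : Fin n₁ ⊕ Fin n₂ → Fin d → Fin m)
    {v : Fin n₁ ⊕ Fin n₂ → EuclideanSpace ℝ (Fin d)}
    (hv : ∀ i, gridMap (K i) (v i) ∈ unitCube d) :
    LMBM (fun i => gridMap (K (.inl i)) (v (.inl i))) (fun j => gridMap (K (.inr j)) (v (.inr j)))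
      ≤ (m : ℝ)⁻¹ * ∑ c, LMBMon (v ∘ Sum.inl) (v ∘ Sum.inr) {i | K (.inl i) = c}
          {j | K (.inr j) = c} +
        √d * ∑ c, |(#{i | K (.inl i) = c} : ℝ) - #{j | K (.inr j) = c}| := by
  refine (LMBM_le_sum_add (Real.sqrt_nonneg d)
    (fun i j => dist_le_sqrt_of_mem_unitCube (hv _) (hv _))
    (fun i => K (.inl i)) fun j => K (.inr j)).trans ?_
  rw [Finset.mul_sum (a := (m : ℝ)⁻¹)]
  gcongr with c
  refine LMBMon_le_mul fun i hi j hj => ?_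
  have hKi : K (.inl i) = c := (Finset.mem_filter.1 hi).2
  have hKj : K (.inr j) = c := (Finset.mem_filter.1 hj).2
  rw [hKi, hKj, dist_gridMap]
  rfl

lemma meanLMBM_le_integral_grid (d m n₁ n₂ : ℕ) [NeZero m] :
    meanLMBM d n₁ n₂ ≤ ∫ K : Fin n₁ ⊕ Fin n₂ → Fin d → Fin m,
      (m : ℝ)⁻¹ * ∑ c, meanLMBM d #{i | K (.inl i) = c} #{j | K (.inr j) = c} +
        √d * ∑ c, |(#{i | K (.inl i) = c} : ℝ) - #{j | K (.inr j) = c}|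
      ∂(Measure.pi fun _ => uniformOn Set.univ) := by
  have hmp := measurePreserving_pi_prod (ι := Fin n₁ ⊕ Fin n₂)
    (measurePreserving_gridMap (d := d) (m := m))
  have hfint := hmp.integrable_comp_of_integrable (integrable_LMBMon Finset.univ Finset.univ)
  have hcube := Measure.ae_ae_of_ae_prod
    (hmp.quasiMeasurePreserving.ae (ae_forall_mem_unitCube _ d))
  refine (integral_LMBM_of_hasLaw hmp.hasLaw).ge.trans ((integral_prod _ hfint).le.trans ?_)
  refine integral_mono_ae hfint.integral_prod_left .of_finite ?_
  filter_upwards [hcube, hfint.prod_right_ae] with K hK hintK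
  have hcells := integrable_finsetSum Finset.univ fun c _ =>
    integrable_LMBMon (d := d) {i | K (.inl i) = c} {j | K (.inr j) = c}
  refine (integral_mono_ae hintK ((hcells.const_mul _).add (integrable_const _))
    (hK.mono fun v hv => LMBM_gridMap_le K hv)).trans_eq ?_
  rw [integral_add' (hcells.const_mul _) (integrable_const _), integral_const_mul,
    integral_finsetSum _ fun c _ => integrable_LMBMon _ _]
  simp only [integral_LMBMon, integral_const, probReal_univ, one_smul]

lemma integral_abs_card_cell_sub_le [NeZero m] {ι : Type*} [Fintype ι] {N : ℕ}
    {g : Fin (m ^ d * N) → ι} (hg : g.Injective) (c : Fin d → Fin m) :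
    ∫ K : ι → Fin d → Fin m, |(#{i | K (g i) = c} : ℝ) - N|
      ∂(Measure.pi fun _ => uniformOn Set.univ) ≤ √N := by
  have hmean : (Fintype.card (Fin (m ^ d * N)) : ℝ) *
      (uniformOn Set.univ : Measure (Fin d → Fin m)).real {c} = N := by
    have hm : (m : ℝ) ^ d ≠ 0 := pow_ne_zero _ (NeZero.ne _)
    rw [uniformOn_univ_real_singleton, Fintype.card_pi_const, Fintype.card_fin, Fintype.card_fin,
      Nat.cast_mul, Nat.cast_pow, mul_comm _ (N : ℝ), mul_inv_cancel_right₀ hm]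
  have hdev := integral_abs_card_filter_eq_sub_le (ι := Fin (m ^ d * N))
    (uniformOn Set.univ) c
  rw [hmean] at hdev
  refine ((measurePreserving_comp_of_injective _ hg).hasLaw.integral_comp
    (f := fun K => |(#{i | K i = c} : ℝ) - N|) ?_).trans_le hdev
  exact (measurable_of_countable _).aestronglyMeasurable

lemma sum_meanLMBM_le {τ : Type*} [Fintype τ] (d N : ℕ) {r : ℝ} (hr₀ : 0 ≤ r) (hr₁ : r ≤ 1)
    (a b : τ → ℕ) :
    r * ∑ c, meanLMBM d (a c) (b c) + √d * ∑ c, |(a c : ℝ) - b c| ≤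
      r * (Fintype.card τ * meanLMBM d N N) +
        2 * √d * ∑ c, (|(a c : ℝ) - N| + |(b c : ℝ) - N|) := by
  have hdev (c : τ) : |(a c : ℝ) - b c| ≤ |(a c : ℝ) - N| + |(b c : ℝ) - N| := by
    rw [abs_sub_comm (b c : ℝ)]
    exact abs_sub_le _ _ _
  have hcell (c : τ) : r * meanLMBM d (a c) (b c) ≤
      r * meanLMBM d N N + √d * (|(a c : ℝ) - N| + |(b c : ℝ) - N|) := by
    calc r * meanLMBM d (a c) (b c)
        ≤ r * (meanLMBM d N N + √d * (|(a c : ℝ) - N| + |(b c : ℝ) - N|)) := by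
          gcongr
          exact meanLMBM_le_add d _ _ N N
      _ ≤ r * meanLMBM d N N + 1 * (√d * (|(a c : ℝ) - N| + |(b c : ℝ) - N|)) := by
          rw [mul_add]
          gcongr
      _ = _ := by rw [one_mul]
  calc r * ∑ c, meanLMBM d (a c) (b c) + √d * ∑ c, |(a c : ℝ) - b c|
      ≤ ∑ c, (r * meanLMBM d N N + √d * (|(a c : ℝ) - N| + |(b c : ℝ) - N|)) +
          √d * ∑ c, (|(a c : ℝ) - N| + |(b c : ℝ) - N|) := by
        rw [Finset.mul_sum]
        gcongr with c _ c
        exacts [hcell c, hdev c]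
    _ = _ := by
        rw [Finset.sum_add_distrib, Finset.sum_const, Finset.card_univ, nsmul_eq_mul,
          ← Finset.mul_sum]
        ring

lemma integral_sum_abs_card_cell_sub_le [NeZero m] {n N : ℕ} (hn : n = m ^ d * N) :
    ∫ K : Fin n ⊕ Fin n → Fin d → Fin m,
      ∑ c, (|(#{i | K (.inl i) = c} : ℝ) - N| + |(#{i | K (.inr i) = c} : ℝ) - N|)
      ∂(Measure.pi fun _ => uniformOn Set.univ) ≤ m ^ d * (2 * √N) := by
  subst hn
  rw [integral_finsetSum _ fun _ _ => .of_finite]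
  calc _ ≤ ∑ _c : Fin d → Fin m, (√N + √N) := Finset.sum_le_sum fun c _ => by
        rw [integral_add .of_finite .of_finite]
        exact add_le_add (integral_abs_card_cell_sub_le Sum.inl_injective c)
          (integral_abs_card_cell_sub_le Sum.inr_injective c)
    _ = m ^ d * (2 * √N) := by
        simp [two_mul, mul_add]

lemma meanLMBM_le_of_eq_pow_mul [NeZero m] {n N : ℕ} (hn : n = m ^ d * N) :
    meanLMBM d n n ≤ (m : ℝ)⁻¹ * (m ^ d * meanLMBM d N N) + 4 * √d * m ^ d * √N := by
  have hm : (m : ℝ)⁻¹ ≤ 1 := inv_le_one_of_one_le₀ (Nat.one_le_cast.2 (NeZero.pos m))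
  have hm₀ : 0 ≤ (m : ℝ)⁻¹ := by positivity
  calc meanLMBM d n n
      ≤ ∫ K : Fin n ⊕ Fin n → Fin d → Fin m,
          (m : ℝ)⁻¹ * (Fintype.card (Fin d → Fin m) * meanLMBM d N N) + 2 * √d *
            ∑ c, (|(#{i | K (.inl i) = c} : ℝ) - N| + |(#{i | K (.inr i) = c} : ℝ) - N|)
          ∂(Measure.pi fun _ => uniformOn Set.univ) :=
        (meanLMBM_le_integral_grid d m n n).trans <| integral_mono .of_finite .of_finite fun K =>
          sum_meanLMBM_le d N hm₀ hm _ _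
    _ = (m : ℝ)⁻¹ * (m ^ d * meanLMBM d N N) + 2 * √d * ∫ K : Fin n ⊕ Fin n → Fin d → Fin m,
            ∑ c, (|(#{i | K (.inl i) = c} : ℝ) - N| + |(#{i | K (.inr i) = c} : ℝ) - N|)
            ∂(Measure.pi fun _ => uniformOn Set.univ) := by
        rw [integral_add .of_finite .of_finite, integral_const, probReal_univ, one_smul,
          integral_const_mul, Fintype.card_pi_const, Fintype.card_fin, Nat.cast_pow]
    _ ≤ (m : ℝ)⁻¹ * (m ^ d * meanLMBM d N N) + 2 * √d * (m ^ d * (2 * √N)) := by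
        gcongr
        exact integral_sum_abs_card_cell_sub_le hn
    _ = _ := by ring

lemma isAlmostHomogeneous_meanLMBM {d : ℕ} (hd : d ≠ 0) :
    IsAlmostHomogeneous (fun n => meanLMBM d n n) d (1 - 1 / (d : ℝ)) (1 / 2) where
  nonneg _ := meanLMBM_nonneg
  add_le := meanLMBM_add_le d
  pow_mul_le m hm := by
    have : NeZero m := ⟨Nat.one_le_iff_ne_zero.1 hm⟩
    have hexp : ((m : ℝ) ^ d) ^ (1 - 1 / (d : ℝ)) = (m : ℝ)⁻¹ * m ^ d := by
      rw [Real.rpow_sub (by positivity), Real.rpow_one, one_div,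
        Real.pow_rpow_inv_natCast (by positivity) hd, div_eq_inv_mul]
    refine ⟨4 * √d * m ^ d, fun N _ => ?_⟩
    rw [hexp, ← Real.sqrt_eq_rpow, mul_assoc (m : ℝ)⁻¹]
    exact meanLMBM_le_of_eq_pow_mul rfl

end GridRecursion

section Poissonization

open scoped NNReal Nat

lemma hasSum_descFactorial_poissonMeasure (r : ℝ≥0) (k : ℕ) :
    HasSum (fun n : ℕ => Real.exp (-r) * r ^ n / n ! * (n.descFactorial k : ℝ)) ((r : ℝ) ^ k) := by
  rw [← hasSum_nat_add_iff' k, Finset.sum_eq_zero fun n hn => by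
    rw [Nat.descFactorial_eq_zero_iff_lt.2 (Finset.mem_range.1 hn), Nat.cast_zero, mul_zero],
    sub_zero]
  have hterm (n : ℕ) : Real.exp (-r) * r ^ (n + k) / (n + k)! * ((n + k).descFactorial k : ℝ) =
      r ^ k * (Real.exp (-r) * r ^ n / n !) := by
    rw [← Nat.factorial_mul_descFactorial (Nat.le_add_left k n), Nat.add_sub_cancel, Nat.cast_mul]
    have hdesc : ((n + k).descFactorial k : ℝ) ≠ 0 :=
      Nat.cast_ne_zero.2 (Nat.descFactorial_eq_zero_iff_lt.not.2 (by omega))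
    field_simp
    ring
  simpa only [hterm, mul_one] using (hasSum_one_poissonMeasure r).mul_left ((r : ℝ) ^ k)

lemma integrable_descFactorial_poissonMeasure (r : ℝ≥0) (k : ℕ) :
    Integrable (fun n : ℕ => (n.descFactorial k : ℝ)) (poissonMeasure r) :=
  integrable_poissonMeasure_iff.2 <| by
    simpa only [Real.norm_natCast] using (hasSum_descFactorial_poissonMeasure r k).summable

lemma integral_descFactorial_poissonMeasure (r : ℝ≥0) (k : ℕ) :
    ∫ n, (n.descFactorial k : ℝ) ∂poissonMeasure r = (r : ℝ) ^ k :=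
  (integral_poissonMeasure r _).trans (hasSum_descFactorial_poissonMeasure r k).tsum_eq

lemma natCast_sq_eq_descFactorial (n : ℕ) :
    (n : ℝ) ^ 2 = n.descFactorial 2 + n.descFactorial 1 := by
  rw [Nat.cast_descFactorial_two, Nat.descFactorial_one]
  ring

lemma integral_natCast_poissonMeasure (r : ℝ≥0) : ∫ n, (n : ℝ) ∂poissonMeasure r = r := by
  simpa only [Nat.descFactorial_one, pow_one] using integral_descFactorial_poissonMeasure r 1

lemma memLp_two_natCast_poissonMeasure (r : ℝ≥0) :
    MemLp (fun n : ℕ => (n : ℝ)) 2 (poissonMeasure r) := by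
  rw [memLp_two_iff_integrable_sq .of_discrete]
  simp only [natCast_sq_eq_descFactorial]
  exact (integrable_descFactorial_poissonMeasure r 2).add
    (integrable_descFactorial_poissonMeasure r 1)

lemma variance_natCast_poissonMeasure (r : ℝ≥0) :
    Var[fun n : ℕ => (n : ℝ); poissonMeasure r] = r := by
  rw [variance_eq_sub (memLp_two_natCast_poissonMeasure r), integral_natCast_poissonMeasure]
  simp only [Pi.pow_apply, natCast_sq_eq_descFactorial]
  rw [integral_add (integrable_descFactorial_poissonMeasure r 2)
    (integrable_descFactorial_poissonMeasure r 1), integral_descFactorial_poissonMeasure,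
    integral_descFactorial_poissonMeasure, add_sub_cancel_left, pow_one]

lemma integrable_abs_natCast_sub_poissonMeasure (r : ℝ≥0) (x : ℝ) :
    Integrable (fun n : ℕ => |(n : ℝ) - x|) (poissonMeasure r) :=
  (((memLp_two_natCast_poissonMeasure r).integrable one_le_two).sub (integrable_const x)).abs

lemma integral_abs_natCast_sub_poissonMeasure_le (r : ℝ≥0) (x : ℝ) :
    ∫ n, |(n : ℝ) - x| ∂poissonMeasure r ≤ √r + |r - x| := by
  have hfint := integrable_abs_natCast_sub_poissonMeasure r r
  calc ∫ n, |(n : ℝ) - x| ∂poissonMeasure r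
      ≤ ∫ n, (|(n : ℝ) - r| + |r - x|) ∂poissonMeasure r :=
        integral_mono (integrable_abs_natCast_sub_poissonMeasure r x)
          (hfint.add (integrable_const _)) fun n => abs_sub_le _ _ _
    _ = ∫ n, |(n : ℝ) - r| ∂poissonMeasure r + |r - x| := by
        rw [integral_add hfint (integrable_const _), integral_const, probReal_univ, one_smul]
    _ ≤ √r + |r - x| := by
        have hdev := integral_abs_sub_integral_le_sqrt_variance (memLp_two_natCast_poissonMeasure r)
        rw [integral_natCast_poissonMeasure, variance_natCast_poissonMeasure] at hdev
        gcongr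

lemma abs_integral_sub_const_le {Ω : Type*} [MeasurableSpace Ω] {P : Measure Ω}
    [IsProbabilityMeasure P] {f b : Ω → ℝ} {c : ℝ} (hf : AEStronglyMeasurable f P)
    (hb : Integrable b P) (hfb : ∀ ω, |f ω - c| ≤ b ω) : |∫ ω, f ω ∂P - c| ≤ ∫ ω, b ω ∂P := by
  have hsub : Integrable (fun ω => f ω - c) P :=
    hb.mono' (hf.sub aestronglyMeasurable_const) (.of_forall hfb)
  have hfint : Integrable f P :=
    (hsub.add (integrable_const c)).congr (.of_forall fun ω => sub_add_cancel _ _)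
  have heq : ∫ ω, (f ω - c) ∂P = ∫ ω, f ω ∂P - c := by
    rw [integral_sub hfint (integrable_const c), integral_const, probReal_univ, one_smul]
  rw [← heq, ← Real.norm_eq_abs]
  exact norm_integral_le_of_norm_le hb (.of_forall hfb)

lemma MP_eq_integral (d : ℕ) (r : ℝ≥0) :
    MP d r = ∫ a, ∫ b, meanLMBM d a b ∂poissonMeasure r ∂poissonMeasure r := by
  simp only [MP, integral_LMBM_prod, integral_poissonMeasure, smul_eq_mul, ← tsum_mul_left]

lemma abs_MP_sub_meanLMBM_le (d : ℕ) (r : ℝ≥0) (N : ℕ) :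
    |MP d r - meanLMBM d N N| ≤ 2 * √d * ∫ n, |(n : ℝ) - N| ∂poissonMeasure r := by
  have hdev := integrable_abs_natCast_sub_poissonMeasure r N
  have hinner (a : ℕ) : |∫ b, meanLMBM d a b ∂poissonMeasure r - meanLMBM d N N| ≤
      √d * (|(a : ℝ) - N| + ∫ b, |(b : ℝ) - N| ∂poissonMeasure r) := by
    refine (abs_integral_sub_const_le .of_discrete
      (((integrable_const |(a : ℝ) - N|).add hdev).const_mul √d)
      fun b => abs_meanLMBM_sub_le d a b N N).trans_eq ?_
    rw [integral_const_mul, integral_add' (integrable_const _) hdev, integral_const,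
      probReal_univ, one_smul]
  rw [MP_eq_integral]
  refine (abs_integral_sub_const_le .of_discrete ((hdev.add (integrable_const _)).const_mul √d)
    hinner).trans_eq ?_
  rw [integral_const_mul, integral_add' hdev (integrable_const _), integral_const,
    probReal_univ, one_smul]
  ring

lemma abs_MP_sub_meanLMBM_floor_le (d : ℕ) {lam : ℝ} (hlam : 0 ≤ lam) :
    |MP d lam - meanLMBM d ⌊lam⌋₊ ⌊lam⌋₊| ≤ 2 * √d * (√lam + 1) := by
  lift lam to ℝ≥0 using hlam
  have hfloor : |(lam : ℝ) - ⌊(lam : ℝ)⌋₊| ≤ 1 := by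
    rw [abs_of_nonneg (sub_nonneg.2 (Nat.floor_le lam.coe_nonneg))]
    linarith [Nat.lt_floor_add_one (lam : ℝ)]
  refine (abs_MP_sub_meanLMBM_le d lam ⌊(lam : ℝ)⌋₊).trans ?_
  gcongr
  exact (integral_abs_natCast_sub_poissonMeasure_le lam _).trans (by gcongr)

lemma tendsto_floor_div_rpow {f : ℕ → ℝ} {α β : ℝ}
    (hf : Tendsto (fun N : ℕ => f N / (N : ℝ) ^ α) atTop (nhds β)) :
    Tendsto (fun x : ℝ => f ⌊x⌋₊ / x ^ α) atTop (nhds β) := by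
  have hratio : Tendsto (fun x : ℝ => ((⌊x⌋₊ : ℝ) / x) ^ α) atTop (nhds 1) := by
    simpa only [Real.one_rpow] using
      (tendsto_nat_floor_div_atTop (R := ℝ)).rpow_const (p := α) (.inl one_ne_zero)
  have hprod := (hf.comp tendsto_nat_floor_atTop).mul hratio
  rw [mul_one] at hprod
  refine hprod.congr' ?_
  filter_upwards [eventually_ge_atTop 1] with x hx
  have hfloor : (0 : ℝ) < ⌊x⌋₊ := Nat.cast_pos.2 (Nat.floor_pos.2 hx)
  rw [Function.comp_apply, Real.div_rpow hfloor.le (zero_le_one.trans hx),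
    div_mul_div_cancel₀ (Real.rpow_pos_of_pos hfloor α).ne']

lemma tendsto_sqrt_add_one_div_rpow {α : ℝ} (hα : 1 / 2 < α) :
    Tendsto (fun x : ℝ => (√x + 1) / x ^ α) atTop (nhds 0) := by
  have hsum := (tendsto_rpow_neg_atTop (y := α - 1 / 2) (by linarith)).add
    (tendsto_rpow_neg_atTop (y := α) (by linarith))
  rw [add_zero] at hsum
  refine hsum.congr' ?_
  filter_upwards [eventually_gt_atTop 0] with x hx
  rw [neg_sub, Real.rpow_sub hx, Real.rpow_neg hx.le, Real.sqrt_eq_rpow, add_div, one_div (x ^ α)]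

lemma tendsto_div_rpow_of_abs_sub_floor_le {f : ℕ → ℝ} {g : ℝ → ℝ} {C α β : ℝ} (hα : 1 / 2 < α)
    (hf : Tendsto (fun N : ℕ => f N / (N : ℝ) ^ α) atTop (nhds β))
    (hg : ∀ x, 0 ≤ x → |g x - f ⌊x⌋₊| ≤ C * (√x + 1)) :
    Tendsto (fun x => g x / x ^ α) atTop (nhds β) := by
  have herr : Tendsto (fun x => g x / x ^ α - f ⌊x⌋₊ / x ^ α) atTop (nhds 0) := by
    refine squeeze_zero_norm' (a := fun x => C * ((√x + 1) / x ^ α)) ?_ ?_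
    · filter_upwards [eventually_ge_atTop 0] with x hx
      have hpow : 0 ≤ x ^ α := Real.rpow_nonneg hx α
      rw [← sub_div, norm_div, Real.norm_eq_abs, Real.norm_of_nonneg hpow, ← mul_div_assoc]
      exact div_le_div_of_nonneg_right (hg x hx) hpow
    · simpa only [mul_zero] using (tendsto_sqrt_add_one_div_rpow hα).const_mul C
  simpa only [sub_add_cancel, zero_add] using herr.add (tendsto_floor_div_rpow hf)

end Poissonization

/-- For `d ≥ 3`, the mean `E(L_N)/N^{1−1/d}` for `2N` i.i.d. uniform points of `[0,1]^d`
converges as `N → ∞`, to the same constant `β_MBM(d)` as the Poissonized normalized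
mean `M(N)/N^{1−1/d}`. -/
theorem EL_tendsto_beta
    (d : ℕ) (hd : 3 ≤ d)
    (Ω : Type*) [MeasureSpace Ω] [IsProbabilityMeasure (ℙ : Measure Ω)]
    (X Y : ℕ → Ω → EuclideanSpace ℝ (Fin d))
    (hmeas : ∀ n, Measurable (Sum.elim X Y n))
    (hindep : iIndepFun (Sum.elim X Y) ℙ)
    (hunif : ∀ n, Measure.map (Sum.elim X Y n) ℙ = unifCube d) :
    ∃ β : ℝ,
      Tendsto (fun N : ℝ => MP d N / N ^ (1 - 1 / (d : ℝ))) atTop (nhds β) ∧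
      Tendsto
        (fun N : ℕ =>
          (∫ ω, LMBM (fun i : Fin N => X i ω) (fun j : Fin N => Y j ω) ∂ℙ) /
            (N : ℝ) ^ (1 - 1 / (d : ℝ)))
        atTop (nhds β) := by
  have hlaw (N : ℕ) : HasLaw (fun ω k => Sum.elim X Y (Sum.map Fin.val Fin.val k) ω)
      (iidUnif (Fin N ⊕ Fin N) d) ℙ :=
    (hindep.precomp (Sum.map_injective.2 ⟨Fin.val_injective, Fin.val_injective⟩)).hasLaw_pi
      fun k => ⟨(hmeas _).aemeasurable, hunif _⟩
  have hmean (N : ℕ) :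
      ∫ ω, LMBM (fun i : Fin N => X i ω) (fun j : Fin N => Y j ω) ∂ℙ = meanLMBM d N N :=
    (integral_LMBM_of_hasLaw (hlaw N) :)
  have hα : 1 / 2 < 1 - 1 / (d : ℝ) := by
    have hd' : 1 / (d : ℝ) ≤ 1 / 3 := one_div_le_one_div_of_le (by norm_num) (by exact_mod_cast hd)
    linarith
  obtain ⟨β, hβ⟩ := (isAlmostHomogeneous_meanLMBM (by omega : d ≠ 0)).exists_tendsto_div_rpow
    (by omega) (by norm_num) hα
  refine ⟨β, ?_, ?_⟩
  · exact tendsto_div_rpow_of_abs_sub_floor_le hα hβ fun _ => abs_MP_sub_meanLMBM_floor_le d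
  · simpa only [hmean] using hβ
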